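/- For every odd n ≥ 3, there exists a 3-rainbow cycle in the permutahedron P^adj_n: a cyclically ordered list of pairwise distinct permutations of [n] in which any two cyclically consecutive permutations differ by an adjacent position-swap, and each of the n−1 adjacent position-swaps (i, i+1), i ∈ [n−1], is used exactly 3 times around the cycle. -/

import Mathlib

/-!
A closed walk in the permutahedron is a word in the adjacent swaps with product `1`. Two such cycle
words `x u` and `y v` with letters in subgroups `H` and `K` that meet trivially, where `y` commutes
with the letters of `u`, can be spliced into the cycle word `x v u y`. It uses each letter as often
as `x u` and `y v` do together: it steps along `x`, follows the second cycle up to its closing edge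
`y`, runs through a translate of the first cycle, and steps back along `y`. No vertex is repeated,
since products of an element of `H` and an element of `K` are unique.

Take a rainbow cycle on the positions `0, …, k` and one on the positions `k, k + 1, …`. Swaps of the
former fix everything above `k` and swaps of the latter fix everything below, so the subgroups they
generate meet trivially, and splicing yields a rainbow cycle on all positions. The permutahedron of
order `3` is a hexagon, itself a 3-rainbow cycle. Splicing in copies of it adds two positions at a
time and reaches every odd `n ≥ 3`.
-/

section PrefixProds

variable {M N : Type*} [Monoid M] [Monoid N]

/-- The products of the proper prefixes of a word, i.e. the vertices visited by the walk that reads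
`w` from `1` in the right Cayley graph. The endpoint `w.prod` is left out, so that the vertices of
a closed walk are not repeated. -/
def prefixProds (w : List M) : List M :=
  (List.range w.length).map fun k => (w.take k).prod

@[simp]
theorem prefixProds_nil : prefixProds ([] : List M) = [] := rfl

@[simp]
theorem prefixProds_cons (g : M) (w : List M) :
    prefixProds (g :: w) = 1 :: (prefixProds w).map (g * ·) := by
  simp [prefixProds, List.range_succ_eq_map]

@[simp]
theorem prefixProds_append (u v : List M) :
    prefixProds (u ++ v) = prefixProds u ++ (prefixProds v).map (u.prod * ·) := by
  induction u with
  | nil => simp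
  | cons g u ih => simp [ih, Function.comp_def, mul_assoc]

theorem prefixProds_map (φ : M →* N) (w : List M) :
    prefixProds (w.map φ) = (prefixProds w).map φ := by
  simp [prefixProds, ← List.map_take, List.prod_hom]

theorem mem_of_mem_prefixProds {S : Type*} [SetLike S M] [SubmonoidClass S M] {K : S}
    {w : List M} (hw : ∀ g ∈ w, g ∈ K) {g : M} (hg : g ∈ prefixProds w) : g ∈ K := by
  obtain ⟨k, -, rfl⟩ := List.mem_map.1 hg
  exact list_prod_mem fun g hg => hw g (List.mem_of_mem_take hg)

theorem commute_of_mem_prefixProds {y : M} {w : List M} (hw : ∀ g ∈ w, Commute y g) {g : M}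
    (hg : g ∈ prefixProds w) : Commute y g := by
  obtain ⟨k, -, rfl⟩ := List.mem_map.1 hg
  exact Commute.list_prod_right _ _ fun g hg => hw g (List.mem_of_mem_take hg)

/-- A word is a cycle word if reading it from `1` in the right Cayley graph traces a closed walk
that visits no vertex twice. -/
structure IsCycleWord (w : List M) : Prop where
  prod_eq_one : w.prod = 1
  nodup_prefixProds : (prefixProds w).Nodup

end PrefixProds

theorem nodup_map_mul_of_disjoint {G : Type*} [Group G] {H K : Subgroup G} (hHK : Disjoint H K)
    {l : List (G × G)} (hmem : ∀ p ∈ l, p.1 ∈ H ∧ p.2 ∈ K) (hl : l.Nodup) :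
    (l.map fun p => p.1 * p.2).Nodup := by
  lift l to List (H × K) using hmem
  rw [List.map_map]
  exact hl.of_map.map (Subgroup.mul_injective_of_disjoint hHK)

namespace IsCycleWord

section Monoid

variable {M N : Type*} [Monoid M] [Monoid N] {w : List M} {n : ℕ}

theorem map_iff {φ : M →* N} (hφ : Function.Injective φ) :
    IsCycleWord (w.map φ) ↔ IsCycleWord w := by
  have hprod : (w.map φ).prod = 1 ↔ w.prod = 1 := by rw [List.prod_hom, map_eq_one_iff φ hφ]
  have hnodup : (prefixProds (w.map φ)).Nodup ↔ (prefixProds w).Nodup := by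
    rw [prefixProds_map, List.nodup_map_iff hφ]
  exact ⟨fun h => ⟨hprod.1 h.1, hnodup.1 h.2⟩, fun h => ⟨hprod.2 h.1, hnodup.2 h.2⟩⟩

theorem injective_prod_take (hw : IsCycleWord w) (hn : w.length = n + 1) :
    Function.Injective fun s : Fin (n + 1) => (w.take s).prod := fun s t hst =>
  Fin.ext <| List.inj_on_of_nodup_map hw.nodup_prefixProds (List.mem_range.2 (by omega))
    (List.mem_range.2 (by omega)) hst

theorem prod_take_add_one (hw : IsCycleWord w) (hn : w.length = n + 1) (s : Fin (n + 1)) :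
    (w.take (s + 1 : Fin (n + 1))).prod = (w.take s).prod * w[s] := by
  rw [Fin.getElem_fin, ← List.prod_take_succ]
  obtain rfl | hs := eq_or_ne s (Fin.last n)
  · simp [← hn, hw.prod_eq_one]
  · rw [Fin.val_add_one, if_neg hs]

end Monoid

theorem card_filter_prod_take_eq_count {M : Type*} [LeftCancelMonoid M] [DecidableEq M]
    {w : List M} {n : ℕ} (hw : IsCycleWord w) (hn : w.length = n + 1) (g : M) :
    (Finset.univ.filter fun s : Fin (n + 1) =>
      (w.take (s + 1 : Fin (n + 1))).prod = (w.take s).prod * g).card = w.count g := by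
  simp only [hw.prod_take_add_one hn, mul_right_inj]
  exact Fin.card_filter_univ_eq_vector_get_eq_count g (⟨w, hn⟩ : List.Vector M (n + 1))

section Group

variable {G : Type*} [Group G]

theorem prefixProds_splice_perm {x y : G} {u v : List G} (hu : IsCycleWord (x :: u))
    (hv : IsCycleWord (y :: v)) (hcomm : ∀ g ∈ u, Commute y g) :
    (prefixProds (x :: (v ++ (u ++ [y])))).Perm
      (1 :: ((prefixProds v).map (x * ·) ++ (prefixProds (x :: u)).map (· * y⁻¹))) := by
  have hu_prod : x * u.prod = 1 := by simpa using hu.prod_eq_one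
  have hv_prod : v.prod = y⁻¹ := eq_inv_of_mul_eq_one_right (by simpa using hv.prod_eq_one)
  have hlast : x * (y⁻¹ * u.prod) = y⁻¹ := by
    rw [(Commute.list_prod_right _ _ hcomm).inv_left.eq, ← mul_assoc, hu_prod, one_mul]
  have hmap : (prefixProds u).map (fun g => x * (y⁻¹ * g)) =
      (prefixProds u).map fun g => x * g * y⁻¹ :=
    List.map_congr_left fun g hg => by
      rw [(commute_of_mem_prefixProds hcomm hg).inv_left.eq, mul_assoc]
  simpa [hv_prod, hlast, hmap, Function.comp_def] using
    (List.perm_append_singleton _ _).append_left _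

theorem splice {H K : Subgroup G} (hHK : Disjoint H K) {x y : G} {u v : List G}
    (hu : IsCycleWord (x :: u)) (hv : IsCycleWord (y :: v))
    (huH : ∀ g ∈ x :: u, g ∈ H) (hvK : ∀ g ∈ y :: v, g ∈ K)
    (hx : x ≠ 1) (hy : y ≠ 1) (hcomm : ∀ g ∈ u, Commute y g) :
    IsCycleWord (x :: (v ++ (u ++ [y]))) where
  prod_eq_one := by
    have hu_prod : x * u.prod = 1 := by simpa using hu.prod_eq_one
    have hv_prod : y * v.prod = 1 := by simpa using hv.prod_eq_one
    have hyu : Commute y u.prod := Commute.list_prod_right _ _ hcomm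
    calc (x :: (v ++ (u ++ [y]))).prod = x * v.prod * (u.prod * y) := by simp [mul_assoc]
      _ = x * (v.prod * y) * u.prod := by rw [← hyu.eq]; simp only [mul_assoc]
      _ = 1 := by rw [mul_eq_one_comm.1 hv_prod, mul_one, hu_prod]
  nodup_prefixProds := by
    let pairs : List (G × G) :=
      (1, 1) :: ((prefixProds v).map (x, ·) ++ (prefixProds (x :: u)).map (·, y⁻¹))
    have hpairs_mem : ∀ p ∈ pairs, p.1 ∈ H ∧ p.2 ∈ K := by
      have hyK : y⁻¹ ∈ K := K.inv_mem (hvK y (by simp))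
      have hu_mem : ∀ g ∈ prefixProds (x :: u), g ∈ H := fun _ => mem_of_mem_prefixProds huH
      have hv_mem : ∀ g ∈ prefixProds v, g ∈ K :=
        fun _ => mem_of_mem_prefixProds fun g hg => hvK g (.tail _ hg)
      simp only [pairs, List.mem_cons, List.mem_append, List.mem_map]
      grind [H.one_mem, K.one_mem]
    have hpairs_nodup : pairs.Nodup := by
      have ⟨hy_notMem, hv_nodup⟩ : y⁻¹ ∉ prefixProds v ∧ (prefixProds v).Nodup := by
        simpa [List.nodup_map_iff (mul_right_injective y), mul_eq_one_iff_inv_eq]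
          using hv.nodup_prefixProds
      refine List.nodup_cons.2 ⟨?_, List.nodup_append.2
        ⟨hv_nodup.map (Prod.mk_right_injective x),
          hu.nodup_prefixProds.map (Prod.mk_left_injective y⁻¹), ?_⟩⟩
      · simp [hx, hy]
      · simp only [List.mem_map]
        grind
    rw [(prefixProds_splice_perm hu hv hcomm).nodup_iff]
    simpa [pairs, Function.comp_def] using nodup_map_mul_of_disjoint hHK hpairs_mem hpairs_nodup

end Group

end IsCycleWord

section Perm

variable {α β : Type*}

theorem viaEmbedding_swap [DecidableEq α] [DecidableEq β] (ι : α ↪ β) (a b : α) :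
    (Equiv.swap a b).viaEmbedding ι = Equiv.swap (ι a) (ι b) := by
  ext x
  by_cases hx : x ∈ Set.range ι
  · obtain ⟨y, rfl⟩ := hx
    rw [Equiv.Perm.viaEmbedding_apply, ι.injective.map_swap]
  · rw [Equiv.Perm.viaEmbedding_apply_of_notMem _ _ _ hx, Equiv.swap_apply_of_ne_of_ne] <;>
    · rintro rfl
      exact hx (Set.mem_range_self _)

theorem perm_eq_one_of_forall_ne {g : Equiv.Perm α} {a : α} (h : ∀ x ≠ a, g x = x) : g = 1 := by
  have ha : g a = a := by
    by_contra ha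
    exact ha (g.injective (h _ ha))
  ext x
  obtain rfl | hx := eq_or_ne x a
  exacts [ha, h x hx]

theorem disjoint_fixingSubgroup_perm {s t : Set α} {a : α} (hst : {a}ᶜ ⊆ s ∪ t) :
    Disjoint (fixingSubgroup (Equiv.Perm α) s) (fixingSubgroup (Equiv.Perm α) t) := by
  refine Subgroup.disjoint_def.2 fun hs ht => perm_eq_one_of_forall_ne (a := a) fun x hx => ?_
  rw [mem_fixingSubgroup_iff] at hs ht
  exact (hst hx).elim (hs x) (ht x)

end Perm

/-- The swap of positions `i` and `i + 1`. It lives in `Perm ℕ` rather than `Perm (Fin n)`, so that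
words for different `n` can be combined. -/
def adjSwap (i : ℕ) : Equiv.Perm ℕ := Equiv.swap i (i + 1)

theorem adjSwap_ne_one (i : ℕ) : adjSwap i ≠ 1 := by
  simp [adjSwap, Equiv.swap_eq_one_iff]

theorem adjSwap_injective : Function.Injective adjSwap := by
  intro i j h
  have hi := DFunLike.congr_fun h i
  have hj := DFunLike.congr_fun h j
  simp only [adjSwap, Equiv.swap_apply_def] at hi hj
  grind

theorem adjSwap_mem_fixingSubgroup {i : ℕ} {s : Set ℕ} (hi : i ∉ s) (hi' : i + 1 ∉ s) :
    adjSwap i ∈ fixingSubgroup (Equiv.Perm ℕ) s :=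
  mem_fixingSubgroup_iff _ |>.2 fun x hx =>
    Equiv.swap_apply_of_ne_of_ne (by rintro rfl; exact hi hx) (by rintro rfl; exact hi' hx)

theorem commute_adjSwap {i j : ℕ} (h : i + 1 < j) : Commute (adjSwap i) (adjSwap j) :=
  (Equiv.Perm.disjoint_swap_swap (by grind)).commute

theorem viaEmbeddingHom_addLeftEmbedding_adjSwap (b i : ℕ) :
    Equiv.Perm.viaEmbeddingHom (addLeftEmbedding b) (adjSwap i) = adjSwap (b + i) :=
  viaEmbedding_swap _ _ _

/-- `adjSwap` as a permutation of the `m + 1` positions that the swaps `0, …, m - 1` act on. -/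
def finAdjSwap {m : ℕ} (i : Fin m) : Equiv.Perm (Fin (m + 1)) := Equiv.swap i.castSucc i.succ

theorem viaEmbeddingHom_valEmbedding_finAdjSwap {m : ℕ} (i : Fin m) :
    Equiv.Perm.viaEmbeddingHom Fin.valEmbedding (finAdjSwap i) = adjSwap i :=
  viaEmbedding_swap _ _ _

theorem finAdjSwap_injective (m : ℕ) : Function.Injective (finAdjSwap (m := m)) := fun i j h =>
  Fin.val_injective <| adjSwap_injective <| by
    rw [← viaEmbeddingHom_valEmbedding_finAdjSwap, h, viaEmbeddingHom_valEmbedding_finAdjSwap]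

theorem isCycleWord_map_adjSwap_map_add_iff {w : List ℕ} (k : ℕ) :
    IsCycleWord ((w.map (k + ·)).map adjSwap) ↔ IsCycleWord (w.map adjSwap) := by
  rw [← IsCycleWord.map_iff (w := w.map adjSwap)
    (Equiv.Perm.viaEmbeddingHom_injective (addLeftEmbedding k))]
  simp only [List.map_map, Function.comp_def, viaEmbeddingHom_addLeftEmbedding_adjSwap]

theorem isCycleWord_map_adjSwap_map_val_iff {m : ℕ} {w : List (Fin m)} :
    IsCycleWord ((w.map Fin.val).map adjSwap) ↔ IsCycleWord (w.map finAdjSwap) := by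
  rw [← IsCycleWord.map_iff (Equiv.Perm.viaEmbeddingHom_injective Fin.valEmbedding)]
  simp only [List.map_map, Function.comp_def, viaEmbeddingHom_valEmbedding_finAdjSwap]

/-- `w` lists the positions `i` of the swaps `(i, i + 1)` along an `r`-rainbow cycle in the
permutahedron `P^adj_{m + 1}`, positions being numbered from `0`. -/
structure IsRainbowWord (r m : ℕ) (w : List ℕ) : Prop where
  isCycleWord : IsCycleWord (w.map adjSwap)
  coe_eq_nsmul_range : (w : Multiset ℕ) = r • Multiset.range m

namespace IsRainbowWord

variable {r m : ℕ} {w : List ℕ}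

theorem lt_of_mem (hw : IsRainbowWord r m w) {i : ℕ} (hi : i ∈ w) : i < m := by
  have hi : i ∈ r • Multiset.range m := by rwa [← hw.coe_eq_nsmul_range]
  exact Multiset.mem_range.1 (Multiset.mem_of_mem_nsmul hi)

theorem count_eq (hw : IsRainbowWord r m w) {i : ℕ} (hi : i < m) : w.count i = r := by
  rw [← Multiset.coe_count, hw.coe_eq_nsmul_range, Multiset.count_nsmul,
    Multiset.count_eq_one_of_mem (Multiset.nodup_range m) (Multiset.mem_range.2 hi), mul_one]

theorem splice {k a b : ℕ} {u v : List ℕ} (hu : IsRainbowWord r k (a :: u))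
    (hv : IsRainbowWord r m ((b + 1) :: v)) :
    IsRainbowWord r (k + m) (a :: (v.map (k + ·) ++ (u ++ [k + (b + 1)]))) where
  isCycleWord := by
    have hdisj : Disjoint (fixingSubgroup (Equiv.Perm ℕ) (Set.Ioi k))
        (fixingSubgroup (Equiv.Perm ℕ) (Set.Iio k)) :=
      disjoint_fixingSubgroup_perm (a := k) fun _ hx => (lt_or_gt_of_ne hx).symm
    have hu_mem : ∀ g ∈ (a :: u).map adjSwap, g ∈ fixingSubgroup (Equiv.Perm ℕ) (Set.Ioi k) :=
      List.forall_mem_map.2 fun i hi => by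
        have := hu.lt_of_mem hi
        exact adjSwap_mem_fixingSubgroup (by grind) (by grind)
    have hv_mem : ∀ g ∈ (((b + 1) :: v).map (k + ·)).map adjSwap,
        g ∈ fixingSubgroup (Equiv.Perm ℕ) (Set.Iio k) := by
      simp only [List.forall_mem_map]
      exact fun i _ => adjSwap_mem_fixingSubgroup (by grind) (by grind)
    have hcomm : ∀ g ∈ u.map adjSwap, Commute (adjSwap (k + (b + 1))) g :=
      List.forall_mem_map.2 fun i hi => by
        have := hu.lt_of_mem (.tail _ hi)
        exact (commute_adjSwap (by omega)).symm
    have hv_cycle := (isCycleWord_map_adjSwap_map_add_iff k).2 hv.isCycleWord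
    simpa only [List.map_append, List.map_cons, List.map_nil] using
      hu.isCycleWord.splice hdisj hv_cycle hu_mem hv_mem (adjSwap_ne_one _) (adjSwap_ne_one _) hcomm
  coe_eq_nsmul_range := by
    have hperm : (a :: (v.map (k + ·) ++ (u ++ [k + (b + 1)]))).Perm
        (a :: u ++ ((b + 1) :: v).map (k + ·)) := by
      grind
    rw [Multiset.coe_eq_coe.2 hperm, ← Multiset.coe_add, ← Multiset.map_coe,
      hu.coe_eq_nsmul_range, hv.coe_eq_nsmul_range, Multiset.range_add, Multiset.map_nsmul,
      nsmul_add]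

theorem hexagon : IsRainbowWord 3 2 [1, 0, 1, 0, 1, 0] where
  isCycleWord := by
    have h : IsCycleWord (([1, 0, 1, 0, 1, 0] : List (Fin 2)).map finAdjSwap) :=
      ⟨by decide, by decide⟩
    exact isCycleWord_map_adjSwap_map_val_iff.2 h
  coe_eq_nsmul_range := by decide

theorem exists_three_of_even (hm : Even m) (hm₀ : m ≠ 0) : ∃ a u, IsRainbowWord 3 m (a :: u) := by
  obtain ⟨k, rfl⟩ := hm
  induction k, Nat.one_le_iff_ne_zero.2 (by grind : k ≠ 0) using Nat.le_induction with
  | base => exact ⟨_, _, hexagon⟩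
  | succ k _ ih =>
    obtain ⟨a, u, hu⟩ := ih (by omega)
    exact ⟨_, _, by simpa only [add_add_add_comm] using hu.splice hexagon⟩

theorem exists_isCycleWord_map_finAdjSwap (hw : IsRainbowWord r m w) :
    ∃ w' : List (Fin m), IsCycleWord (w'.map finAdjSwap) ∧ ∀ i, w'.count i = r := by
  lift w to List (Fin m) using fun i => hw.lt_of_mem
  refine ⟨w, isCycleWord_map_adjSwap_map_val_iff.1 hw.isCycleWord, fun i => ?_⟩
  rw [← List.count_map_of_injective _ _ Fin.val_injective, hw.count_eq i.2]

end IsRainbowWord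

/-- For every odd `n ≥ 3` there is a 3-rainbow cycle in the permutahedron
`P^adj_n`: a cyclically indexed family `π : Fin (N+1) → Perm (Fin n)` of pairwise
distinct permutations in which any two cyclically consecutive permutations differ by
an adjacent position-swap (`π (s+1) = π s * swap i (i+1)`), and each of the `n−1`
adjacent position-swaps is used exactly `3` times around the cycle. -/
theorem three_rainbow_cycle_permutahedron (n : ℕ) (hn : 3 ≤ n) (hodd : Odd n) :
    ∃ (N : ℕ) (π : Fin (N + 1) → Equiv.Perm (Fin n)),
      Function.Injective π ∧
      (∀ s : Fin (N + 1), ∃ i : ℕ, ∃ h : i + 1 < n,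
        π (s + 1) = π s * Equiv.swap ⟨i, by omega⟩ ⟨i + 1, h⟩) ∧
      (∀ i : ℕ, ∀ h : i + 1 < n,
        (Finset.univ.filter (fun s : Fin (N + 1) =>
          π (s + 1) = π s * Equiv.swap ⟨i, by omega⟩ ⟨i + 1, h⟩)).card = 3) := by
  obtain ⟨m, rfl⟩ : ∃ m, n = m + 1 := ⟨n - 1, by omega⟩
  have hm : Even m := by grind
  obtain ⟨a, u, hau⟩ := IsRainbowWord.exists_three_of_even hm (by omega)
  obtain ⟨w, hw, hcount⟩ := hau.exists_isCycleWord_map_finAdjSwap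
  obtain ⟨N, hN⟩ : ∃ N, w.length = N + 1 := by
    have : 0 < w.count ⟨0, by omega⟩ := by rw [hcount]; exact three_pos
    exact Nat.exists_eq_add_one.2 (List.length_pos_of_mem (List.count_pos_iff.1 this))
  have hN' : (w.map finAdjSwap).length = N + 1 := by rw [List.length_map, hN]
  refine ⟨N, _, hw.injective_prod_take hN', fun s => ?_, fun i hi => ?_⟩
  · refine ⟨w[s], Nat.succ_lt_succ (Fin.is_lt _), ?_⟩
    simpa only [Fin.getElem_fin, List.getElem_map] using! hw.prod_take_add_one hN' s
  · rw [← hcount ⟨i, Nat.lt_of_succ_lt_succ hi⟩,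
      ← List.count_map_of_injective _ _ (finAdjSwap_injective m)]
    exact hw.card_filter_prod_take_eq_count hN' _
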